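/- Let N be a nonempty finite set and let p_data : N → ℝ be a probability distribution on N. For D : N → (0,1) and a probability distribution p_G on N define V(p_G, D) = Σ_{x∈N} p_data(x)·log(D(x)) + Σ_{x∈N} p_G(x)·log(1 − D(x)). Then: (i) for every D : N → (0,1) there exists a probability distribution p_G on N with V(p_G, D) ≤ −log 4; (ii) for the constant discriminator D ≡ 1/2, V(p_G, D) = −log 4 for every probability distribution p_G. Hence the max-min value sup_D inf_{p_G} V(p_G,D) equals −log 4 and is attained by the constant discriminator D(x) = 1/2. -/

import Mathlib

open Finset

/-!
Averaging over `p`, the utility `∑ p φ(D) + ∑ q ψ(D)` at `q = p` is the mean of `(φ + ψ)(D x)`,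
hence at most `φ c + ψ c` if `c` maximises `φ + ψ`. The constant discriminator `c` receives exactly
this value against every `q`, so `(p, c)` is a saddle point. For `φ t = log t` and
`ψ t = log (1 - t)` the maximiser is `1 / 2`, as `t (1 - t) ≤ 1 / 4`.
-/

theorem isGreatest_image_sInf_of_isSaddlePointOn {E F β : Type*} [ConditionallyCompleteLattice β]
    {X : Set E} {Y : Set F} {f : E → F → β} {a : E} {b : F} (ha : a ∈ X) (hb : b ∈ Y)
    (h : IsSaddlePointOn X Y f a b) (hbdd : ∀ y ∈ Y, BddBelow ((f · y) '' X)) :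
    IsGreatest ((fun y => sInf ((f · y) '' X)) '' Y) (f a b) := by
  have least : IsLeast ((f · b) '' X) (f a b) :=
    ⟨Set.mem_image_of_mem _ ha, Set.forall_mem_image.2 fun x hx => h x hx b hb⟩
  refine ⟨⟨b, hb, least.csInf_eq⟩, Set.forall_mem_image.2 fun y hy => ?_⟩
  calc
    sInf ((f · y) '' X) ≤ f a y := csInf_le (hbdd y hy) (Set.mem_image_of_mem _ ha)
    _ ≤ f a b := h a ha y hy

section Utility

variable {N α : Type*} [Fintype N] {φ ψ : α → ℝ} {p q : N → ℝ} {S : Set α} {c : α}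

/-- The utility of a discriminator `D` against a generator distribution `q` when the data follow
`p`: a data point `x` scores `φ (D x)` and a generated one `ψ (D x)`. The vanilla GAN has
`φ t = log t` and `ψ t = log (1 - t)`. The minimising player's `q` precedes `D`, which is the
argument order of `IsSaddlePointOn`. -/
def ganUtility (φ ψ : α → ℝ) (p q : N → ℝ) (D : N → α) : ℝ :=
  ∑ x, p x * φ (D x) + ∑ x, q x * ψ (D x)

theorem ganUtility_const (hp : ∑ x, p x = 1) (hq : ∑ x, q x = 1) :
    ganUtility φ ψ p q (fun _ => c) = φ c + ψ c := by
  simp only [ganUtility, ← sum_mul, hp, hq, one_mul]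

theorem ganUtility_self_le_of_isMaxOn (hc : IsMaxOn (fun t => φ t + ψ t) S c)
    (hp : p ∈ stdSimplex ℝ N) {D : N → α} (hD : ∀ x, D x ∈ S) :
    ganUtility φ ψ p p D ≤ φ c + ψ c :=
  calc
    ganUtility φ ψ p p D = ∑ x, p x * (φ (D x) + ψ (D x)) := by
      simp only [ganUtility, mul_add, sum_add_distrib]
    _ ≤ φ c + ψ c :=
      (convex_Iic (φ c + ψ c)).sum_mem (fun x _ => hp.1 x) hp.2 fun x _ => hc (hD x)

theorem isSaddlePointOn_ganUtility (hc : IsMaxOn (fun t => φ t + ψ t) S c)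
    (hp : p ∈ stdSimplex ℝ N) :
    IsSaddlePointOn (stdSimplex ℝ N) {D | ∀ x, D x ∈ S} (ganUtility φ ψ p) p (fun _ => c) :=
  fun _ hq _ hD =>
    (ganUtility_self_le_of_isMaxOn hc hp hD).trans_eq (ganUtility_const hp.2 hq.2).symm

theorem bddBelow_image_ganUtility_stdSimplex (φ ψ : α → ℝ) (p : N → ℝ) (D : N → α) :
    BddBelow ((ganUtility φ ψ p · D) '' stdSimplex ℝ N) := by
  have continuous_utility : Continuous (ganUtility φ ψ p · D) := by
    unfold ganUtility
    fun_prop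
  exact (isCompact_stdSimplex ℝ N).bddBelow_image continuous_utility.continuousOn

theorem vanilla_gan_maxmin_discriminator_general (hc : IsMaxOn (fun t => φ t + ψ t) S c)
    (hcS : c ∈ S) (hp : p ∈ stdSimplex ℝ N) :
    (∀ D : N → α, (∀ x, D x ∈ S) → ∃ q ∈ stdSimplex ℝ N, ganUtility φ ψ p q D ≤ φ c + ψ c) ∧
    (∀ q ∈ stdSimplex ℝ N, ganUtility φ ψ p q (fun _ => c) = φ c + ψ c) ∧
    IsGreatest ((fun D => sInf ((ganUtility φ ψ p · D) '' stdSimplex ℝ N)) '' {D | ∀ x, D x ∈ S})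
      (φ c + ψ c) := by
  refine ⟨fun D hD => ⟨p, hp, ganUtility_self_le_of_isMaxOn hc hp hD⟩,
    fun q hq => ganUtility_const hp.2 hq.2, ?_⟩
  rw [← ganUtility_const (φ := φ) (ψ := ψ) (c := c) hp.2 hp.2]
  exact isGreatest_image_sInf_of_isSaddlePointOn hp (fun _ => hcS)
    (isSaddlePointOn_ganUtility hc hp) fun D _ => bddBelow_image_ganUtility_stdSimplex φ ψ p D

end Utility

theorem isMaxOn_log_add_log_one_sub :
    IsMaxOn (fun t : ℝ => Real.log t + Real.log (1 - t)) (Set.Ioo 0 1) (1 / 2) := by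
  rintro t ⟨ht₀, ht₁⟩
  have one_sub_pos : 0 < 1 - t := sub_pos.2 ht₁
  calc
    Real.log t + Real.log (1 - t) = Real.log (t * (1 - t)) :=
      (Real.log_mul ht₀.ne' one_sub_pos.ne').symm
    _ ≤ Real.log (1 / 2 * (1 - 1 / 2)) :=
      Real.log_le_log (mul_pos ht₀ one_sub_pos) (by linarith [sq_nonneg (t - 1 / 2)])
    _ = Real.log (1 / 2) + Real.log (1 - 1 / 2) := Real.log_mul (by norm_num) (by norm_num)

theorem log_half_add_log_one_sub_half :
    Real.log (1 / 2) + Real.log (1 - 1 / 2) = -Real.log 4 := by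
  rw [← Real.log_mul (by norm_num) (by norm_num), ← Real.log_inv]
  norm_num

/-- **Max-min discriminator of the vanilla GAN:** (i) against any discriminator some
generator distribution pushes the utility down to `−log 4`; (ii) the constant
discriminator `1/2` guarantees utility `−log 4` against every generator; hence the
max-min value `sup_D inf_{p_G} V` equals `−log 4`, attained at `D ≡ 1/2`. -/
theorem vanilla_gan_maxmin_discriminator
    {N : Type*} [Fintype N] [Nonempty N]
    (pdata : N → ℝ) (h1 : ∀ x, 0 ≤ pdata x) (h2 : ∑ x, pdata x = 1) :
    (∀ D : N → ℝ, (∀ x, D x ∈ Set.Ioo (0:ℝ) 1) →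
      ∃ pG : N → ℝ, (∀ x, 0 ≤ pG x) ∧ ∑ x, pG x = 1 ∧
        ∑ x, pdata x * Real.log (D x) + ∑ x, pG x * Real.log (1 - D x) ≤ -Real.log 4) ∧
    (∀ pG : N → ℝ, (∀ x, 0 ≤ pG x) → ∑ x, pG x = 1 →
      ∑ x, pdata x * Real.log ((1:ℝ)/2) + ∑ x, pG x * Real.log (1 - (1:ℝ)/2) =
        -Real.log 4) ∧
    sSup ((fun D : N → ℝ =>
        sInf ((fun pG : N → ℝ =>
            ∑ x, pdata x * Real.log (D x) + ∑ x, pG x * Real.log (1 - D x)) ''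
          {pG | (∀ x, 0 ≤ pG x) ∧ ∑ x, pG x = 1})) ''
      {D | ∀ x, D x ∈ Set.Ioo (0:ℝ) 1}) = -Real.log 4 := by
  obtain ⟨response, guarantee, greatest⟩ := log_half_add_log_one_sub_half ▸
    vanilla_gan_maxmin_discriminator_general isMaxOn_log_add_log_one_sub (by norm_num) ⟨h1, h2⟩
  exact ⟨fun D hD => (response D hD).imp fun _ => and_assoc.1,
    fun pG h_nonneg h_sum => guarantee pG ⟨h_nonneg, h_sum⟩, greatest.csSup_eq⟩
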